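/- arXiv:1409.3694 — 2 statements merged into one kernel-verified Lean document; each statement's English description precedes it below -/
import Mathlib

section
/- Let q be an even prime power, let α₁, …, α_r ∈ 𝔽_q[x] be distinct polynomials of degree at most 1, α_i = a_i x + b_i, and let ε₁, …, ε_r ∈ {1, 2}. If A_γ = ∅ and A_b = ∅, then C(α₁, …, α_r; 2) = q·(q − #A); in particular C(α₁, …, α_r; 2) ≥ q² − r·q. -/
/-!
In characteristic two, `X² + uX + v` over a finite field is a square when `u = 0`. When `u ≠ 0` it
is separable, and the substitution `X = uY` shows that it splits exactly when `v / u²` has the form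
`s² + s` (`polyMoebius_quadratic`). The values `s² + s` form an additive subgroup of index two,
so the sign `artinSchreierSign` recording membership in it is an additive character
(`artinSchreierSign_add`).

A term `F = X² + uX + v` of the correlation sum thus vanishes if `u + a j = 0` for some `j`, and is
otherwise the sign of `∑ j, ε j (v + b j) / (u + a j)²`. Grouping the indices by the value of `a j`,
both hypotheses together say that this argument is zero (`weighted_sum_eq_zero`), so the term is `1`.
The correlation sum therefore counts the pairs `(u, v)` with `u ∉ {a j}`.
-/

open Polynomial
open scoped Classical

/-- The Möbius function of a polynomial over a finite field. -/
noncomputable def polyMoebius {Fq : Type*} [Field Fq] (F : Polynomial Fq) : ℤ :=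
  if Squarefree F then (-1) ^ Multiset.card (UniqueFactorizationMonoid.factors F) else 0

/-- The autocorrelation sum `C(α₁, …, α_r; n)`. -/
noncomputable def Csum {Fq : Type*} [Field Fq] [Fintype Fq] (n r : ℕ)
    (α : Fin r → Polynomial Fq) (ε : Fin r → ℕ) : ℤ :=
  ∑ a : Fin n → Fq, ∏ j : Fin r,
    (polyMoebius (X ^ n + (∑ i : Fin n, C (a i) * X ^ (i : ℕ)) + α j)) ^ (ε j)

section Helpers

variable {K : Type*} [Field K]

/-- The Artin–Schreier map `s ↦ s² + s` in characteristic two, as an additive homomorphism. -/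
def artinSchreier (K : Type*) [Field K] [CharP K 2] : K →+ K where
  toFun s := s ^ 2 + s
  map_zero' := by simp
  map_add' s t := by rw [CharTwo.add_sq]; ring

/-- The sign that is `1` on the elements of the form `s² + s` and `-1` elsewhere; on a finite field it
is an additive character. -/
noncomputable def artinSchreierSign [CharP K 2] (t : K) : ℤ :=
  if t ∈ (artinSchreier K).range then 1 else -1

/-- The kernel of `s ↦ s² + s` is `{0, 1}`, so on a finite field its range has index two. -/
lemma index_artinSchreier_range [CharP K 2] [Fintype K] : (artinSchreier K).range.index = 2 := by
  have hker : Nat.card (artinSchreier K).ker = 2 := by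
    have h : ((artinSchreier K).ker : Set K) = {0, 1} := by
      ext s
      have : artinSchreier K s = s * (s + 1) := by
        change s ^ 2 + s = _
        ring
      simp [AddMonoidHom.mem_ker, this, CharTwo.add_eq_zero]
    change Nat.card ((artinSchreier K).ker : Set K) = 2
    rw [h, Nat.card_coe_set_eq, Set.ncard_pair zero_ne_one]
  have h1 := (artinSchreier K).range.card_mul_index
  have h2 := (artinSchreier K).ker.card_mul_index
  rw [AddSubgroup.index_ker, hker] at h2
  have hpos : 0 < Nat.card (artinSchreier K).range := Nat.card_pos
  refine Nat.eq_of_mul_eq_mul_left hpos ?_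
  rw [h1, ← h2, mul_comm]

lemma artinSchreierSign_zero [CharP K 2] : artinSchreierSign (0 : K) = 1 := by
  simp [artinSchreierSign]

lemma artinSchreierSign_add [CharP K 2] [Fintype K] (s t : K) :
    artinSchreierSign (s + t) = artinSchreierSign s * artinSchreierSign t := by
  have h := AddSubgroup.add_mem_iff_of_index_two (index_artinSchreier_range (K := K))
    (a := s) (b := t)
  unfold artinSchreierSign
  by_cases hs : s ∈ (artinSchreier K).range <;> by_cases ht : t ∈ (artinSchreier K).range <;>
    simp only [h, hs, ht] <;> norm_num

lemma artinSchreierSign_nsmul [CharP K 2] [Fintype K] (n : ℕ) (t : K) :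
    artinSchreierSign (n • t) = artinSchreierSign t ^ n := by
  induction n with
  | zero => simp [artinSchreierSign_zero]
  | succ n ih => rw [succ_nsmul, artinSchreierSign_add, ih, pow_succ]

lemma artinSchreierSign_sum [CharP K 2] [Fintype K] {ι : Type*} (s : Finset ι) (f : ι → K) :
    artinSchreierSign (∑ i ∈ s, f i) = ∏ i ∈ s, artinSchreierSign (f i) := by
  induction s using Finset.induction_on with
  | empty => simp [artinSchreierSign_zero]
  | insert i s hi ih => rw [Finset.sum_insert hi, Finset.prod_insert hi, artinSchreierSign_add, ih]

lemma irreducible_X_add_C (c : K) : Irreducible (X + C c : K[X]) := by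
  simpa using irreducible_X_sub_C (-c)

lemma card_factors_of_irreducible {p : K[X]} (hp : Irreducible p) :
    Multiset.card (UniqueFactorizationMonoid.factors p) = 1 := by
  have h := UniqueFactorizationMonoid.factors_unique (f := UniqueFactorizationMonoid.factors p)
    (g := {p}) (fun _ => UniqueFactorizationMonoid.irreducible_of_factor _)
    (fun x hx => by rwa [Multiset.mem_singleton.mp hx])
    (by simpa using UniqueFactorizationMonoid.factors_prod hp.ne_zero)
  rw [Multiset.card_eq_card_of_rel h, Multiset.card_singleton]

lemma polyMoebius_sq_add_C [CharP K 2] [Fintype K] (v : K) :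
    polyMoebius (X ^ 2 + C v) = 0 := by
  obtain ⟨w, rfl⟩ := (bijective_frobenius K 2).surjective v
  have h : (X ^ 2 + C (frobenius K 2 w) : K[X]) = (X + C w) * (X + C w) := by
    rw [frobenius_def, C_pow, ← sq, CharTwo.add_sq]
  unfold polyMoebius
  rw [if_neg]
  intro hs
  rw [h] at hs
  exact not_isUnit_X_add_C w (hs _ dvd_rfl)

lemma separable_quadratic [CharP K 2] {u : K} (hu : u ≠ 0) (v : K) :
    (X ^ 2 + C u * X + C v : K[X]).Separable := by
  have hd : derivative (X ^ 2 + C u * X + C v : K[X]) = C u := by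
    simp [one_add_one_eq_two, CharTwo.two_eq_zero]
  rw [separable_def, hd]
  exact (isCoprime_one_right.of_isCoprime_of_dvd_right (isUnit_C.mpr hu.isUnit).dvd)

/-- Two monic linear factors give sign `1`, an irreducible quadratic gives sign `-1`. -/
lemma polyMoebius_quadratic [CharP K 2] {u : K} (hu : u ≠ 0) (v : K) :
    polyMoebius (X ^ 2 + C u * X + C v) = artinSchreierSign (v / u ^ 2) := by
  unfold polyMoebius artinSchreierSign
  rw [if_pos (separable_quadratic hu v).squarefree]
  split_ifs with h
  · obtain ⟨s, hs⟩ := h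
    change s ^ 2 + s = _ at hs
    have hv : v = (u * s) * (u * s + u) := by
      field_simp at hs
      rw [← hs]; ring
    have hF : (X ^ 2 + C u * X + C v : K[X]) = (X + C (u * s)) * (X + C (u * s + u)) := by
      have h2 : (C (u * s) + C (u * s) : K[X]) = 0 := CharTwo.add_self_eq_zero _
      rw [hv, C_mul, C_add]
      linear_combination (-X) * h2
    have hc := Multiset.card_eq_card_of_rel
      (UniqueFactorizationMonoid.factors_mul (X_add_C_ne_zero (u * s)) (X_add_C_ne_zero (u * s + u)))
    rw [hF, hc, Multiset.card_add, card_factors_of_irreducible (irreducible_X_add_C _),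
      card_factors_of_irreducible (irreducible_X_add_C _)]
    norm_num
  · have hm : (X ^ 2 + C u * X + C v : K[X]).Monic := by monicity!
    have hdeg : (X ^ 2 + C u * X + C v : K[X]).natDegree = 2 := by compute_degree!
    have hirr : Irreducible (X ^ 2 + C u * X + C v : K[X]) := by
      rw [hm.irreducible_iff_roots_eq_zero_of_degree_le_three (by omega) (by omega)]
      refine Multiset.eq_zero_of_forall_notMem fun s hs => h ⟨s / u, ?_⟩
      have h0 : s ^ 2 + u * s + v = 0 := by simpa using isRoot_of_mem_roots hs
      change (s / u) ^ 2 + s / u = _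
      rw [CharTwo.add_eq_zero] at h0
      rw [← h0]
      field_simp
    rw [card_factors_of_irreducible hirr, pow_one]

/-- Grouping the indices by the value of `a`, the `v`-part of each group cancels because its total
weight is even, and the `b`-part cancels by hypothesis. -/
lemma weighted_sum_eq_zero [CharP K 2] {r : ℕ} (a b : Fin r → K) (ε : Fin r → ℕ)
    (hγ : ∀ j : Fin r, Even (∑ i ∈ Finset.univ.filter (fun i => a i = a j), ε i))
    (hb : ∀ j : Fin r, ∑ i ∈ Finset.univ.filter (fun i => a i = a j), (ε i) • (b i) = 0)
    (u v : K) : ∑ j, ε j • ((v + b j) / (u + a j) ^ 2) = 0 := by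
  rw [← Finset.sum_fiberwise_of_maps_to
    (fun j _ => Finset.mem_image_of_mem a (Finset.mem_univ j))]
  refine Finset.sum_eq_zero fun c hc => ?_
  obtain ⟨j, -, rfl⟩ := Finset.mem_image.mp hc
  have hv : ∑ i ∈ Finset.univ.filter (fun i => a i = a j), ε i • v = 0 := by
    obtain ⟨m, hm⟩ := hγ j
    rw [Finset.sum_nsmul_assoc, hm, add_nsmul, CharTwo.add_self_eq_zero]
  calc ∑ i ∈ Finset.univ.filter (fun i => a i = a j), ε i • ((v + b i) / (u + a i) ^ 2)
      = ∑ i ∈ Finset.univ.filter (fun i => a i = a j), (ε i • v + ε i • b i) / (u + a j) ^ 2 := by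
        refine Finset.sum_congr rfl fun i hi => ?_
        rw [(Finset.mem_filter.mp hi).2, ← nsmul_add, nsmul_eq_mul, nsmul_eq_mul, mul_div_assoc]
    _ = 0 := by
        rw [← Finset.sum_div, Finset.sum_add_distrib, hv, hb j, add_zero, zero_div]

end Helpers

theorem quadratic_case_full_correlation
    (Fq : Type*) [Field Fq] [Fintype Fq] (q : ℕ) (hq : q = Fintype.card Fq)
    (hq2 : Even q)
    (r : ℕ) (a b : Fin r → Fq)
    (α : Fin r → Polynomial Fq) (hα : ∀ j, α j = C (a j) * X + C (b j))
    (hαdist : Function.Injective α)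
    (ε : Fin r → ℕ) (hε : ∀ j, ε j = 1 ∨ ε j = 2)
    -- `A_γ = ∅` : for every value in `A`, `∑_{i : a_i = a} ε_i` is even
    (hAγ : ∀ j : Fin r, Even (∑ i ∈ Finset.univ.filter (fun i => a i = a j), ε i))
    -- `A_b = ∅` : for every value in `A`, `∑_{i : a_i = a} ε_i b_i = 0`
    (hAb : ∀ j : Fin r, ∑ i ∈ Finset.univ.filter (fun i => a i = a j), (ε i) • (b i) = 0) :
    Csum 2 r α ε = q * (q - (Finset.univ.image a).card) ∧
      Csum 2 r α ε ≥ (q : ℤ) ^ 2 - r * q := by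
  have hchar : ringChar Fq = 2 := by
    rw [FiniteField.even_card_iff_char_two, ← hq]
    exact Nat.even_iff.mp hq2
  have : CharP Fq 2 := hchar ▸ ringChar.charP Fq
  have hε0 (j : Fin r) : ε j ≠ 0 := by have := hε j; omega
  have hterm (w : Fin 2 → Fq) : ∏ j : Fin r,
      (polyMoebius (X ^ 2 + (∑ i : Fin 2, C (w i) * X ^ (i : ℕ)) + α j)) ^ (ε j) =
      if w 1 ∈ Finset.univ.image a then 0 else 1 := by
    have hF (j : Fin r) : X ^ 2 + (∑ i : Fin 2, C (w i) * X ^ (i : ℕ)) + α j =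
        X ^ 2 + C (w 1 + a j) * X + C (w 0 + b j) := by
      rw [hα, Fin.sum_univ_two]
      simp only [Fin.val_zero, Fin.val_one, C_add]
      ring
    simp only [hF]
    split_ifs with h
    · obtain ⟨j, -, hj⟩ := Finset.mem_image.mp h
      refine Finset.prod_eq_zero (Finset.mem_univ j) ?_
      rw [hj, CharTwo.add_self_eq_zero, C_0, zero_mul, add_zero, polyMoebius_sq_add_C,
        zero_pow (hε0 j)]
    · have hne (j : Fin r) : w 1 + a j ≠ 0 := fun h0 => h (Finset.mem_image.mpr
        ⟨j, Finset.mem_univ j, (CharTwo.add_eq_zero.mp h0).symm⟩)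
      simp only [polyMoebius_quadratic (hne _), ← artinSchreierSign_nsmul]
      rw [← artinSchreierSign_sum, weighted_sum_eq_zero a b ε hAγ hAb, artinSchreierSign_zero]
  have hmain : Csum 2 r α ε = q * (q - (Finset.univ.image a).card) := by
    have hcount : ∑ u : Fq, (if u ∈ Finset.univ.image a then (0 : ℤ) else 1) =
        q - (Finset.univ.image a).card := by
      have h (u : Fq) : (if u ∈ Finset.univ.image a then (0 : ℤ) else 1) =
          1 - if u ∈ Finset.univ.image a then 1 else 0 := by split_ifs <;> norm_num
      rw [Finset.sum_congr rfl fun u _ => h u, Finset.sum_sub_distrib, Finset.sum_boole,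
        Finset.filter_univ_mem, hq]
      simp
    unfold Csum
    simp only [hterm]
    have hpairs : ∑ w : Fin 2 → Fq, (if w 1 ∈ Finset.univ.image a then (0 : ℤ) else 1) =
        ∑ p : Fq × Fq, if p.2 ∈ Finset.univ.image a then (0 : ℤ) else 1 :=
      (finTwoArrowEquiv Fq).sum_comp
        (fun p : Fq × Fq => if p.2 ∈ Finset.univ.image a then (0 : ℤ) else 1)
    rw [hpairs, Fintype.sum_prod_type]
    simp only [hcount]
    rw [Finset.sum_const, Finset.card_univ, nsmul_eq_mul, ← hq]
  refine ⟨hmain, ?_⟩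
  have hle : ((Finset.univ.image a).card : ℤ) ≤ r := by
    exact_mod_cast Finset.card_image_le.trans (by simp)
  rw [hmain]
  nlinarith [mul_le_mul_of_nonneg_left hle (Int.natCast_nonneg q)]
end

section
/- Let q be an even prime power, let n > 2, and let α ∈ 𝔽_q[x] be a nonzero polynomial with deg α < n. Let a₁, …, a_{n−1} be indeterminates, and in the ring 𝔽_q[a₁, …, a_{n−1}][t][x] set F = x^n + a_{n−1}x^{n−1} + ⋯ + a₁x + t. Let D(t) = Res_x(F, ∂F/∂x) and D_α(t) = Res_x(F + α, ∂(F + α)/∂x), viewed as polynomials in t over 𝔽_q[a₁, …, a_{n−1}]. Then Res_t(D(t), D_α(t)) is not the zero element of 𝔽_q[a₁, …, a_{n−1}]. -/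
/-!
Write `f = x^n + a_{n-1} x^{n-1} + ⋯ + a₁ x`, and let `Ω` be an algebraic closure of the fraction
field of `𝔽_q[a₁, …, a_{n-1}]`. If the resultant vanished, `D` and `D_α` would have a common root
`t₀ ∈ Ω`. As `f + t₀` and `f + α + t₀` are monic, the vanishing of their discriminants gives
`x₀, x₁ ∈ Ω` with `f'(x₀) = 0`, `(f + α)'(x₁) = 0` and `f(x₀) = t₀ = f(x₁) + α(x₁)` (signs are
irrelevant in characteristic two).

Because `(a₂ x²)' = 0`, neither `f'` nor `(f + α)'` involves `a₂`; both are nonzero, having constant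
term `a₁` plus a scalar. Hence `x₀` and `x₁` are algebraic over `A = 𝔽_q[a_j : j ≠ 2]`. In
`f(x₀) = f(x₁) + α(x₁)` the coefficient of `a₂` is `x₀² - x₁²`; as `a₂` is transcendental over `A`,
it vanishes, so `x₀ = x₁` and therefore `α(x₀) = 0`. Since `α ≠ 0`, `x₀` is algebraic over `𝔽_q`,
and `f'(x₀) = 0` then exhibits `a₁` as algebraic over `𝔽_q[a_j : j ≠ 1]`, a contradiction
(`no_common_critical_value`).

The determinants are handled by identifying `resultant` with `Polynomial.resultant`
(`resultant_eq_polynomial_resultant`), whose vanishing detects common factors.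
-/

open Polynomial

/-- The Sylvester matrix of `f` and `g`, viewed as polynomials of degree (at most)
`m` and `n` respectively. -/
noncomputable def sylvester {R : Type*} [CommRing R] (m n : ℕ) (f g : Polynomial R) :
    Matrix (Fin (n + m)) (Fin (n + m)) R :=
  Matrix.of fun i j =>
    Fin.addCases
      (fun i₁ : Fin n => if (j : ℕ) ≤ m + (i₁ : ℕ) then f.coeff (m + (i₁ : ℕ) - j) else 0)
      (fun i₂ : Fin m => if (j : ℕ) ≤ n + (i₂ : ℕ) then g.coeff (n + (i₂ : ℕ) - j) else 0) i

/-- The resultant of `f` and `g`, viewed as polynomials of degree `m` and `n`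
respectively: the determinant of the Sylvester matrix. -/
noncomputable def resultant {R : Type*} [CommRing R] (m n : ℕ) (f g : Polynomial R) : R :=
  (sylvester m n f g).det

/-! ### Resultants and common roots -/

/-- The two conventions for the Sylvester matrix differ by a transposition and by reversing the
order of both rows and columns, none of which changes the determinant. -/
lemma resultant_eq_polynomial_resultant {R : Type*} [CommRing R] (m n : ℕ) (f g : Polynomial R)
    (hf : f.natDegree ≤ m) (hg : g.natDegree ≤ n) :
    _root_.resultant m n f g = Polynomial.resultant f g m n := by
  let e : Fin (n + m) ≃ Fin (m + n) := (finCongr (add_comm n m)).trans Fin.revPerm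
  have key : _root_.sylvester m n f g = ((Polynomial.sylvester f g m n).submatrix e e).transpose := by
    ext i j
    have hj := j.isLt
    rw [Matrix.transpose_apply, Matrix.submatrix_apply]
    induction i using Fin.addCases with
    | left i =>
      have hi := i.isLt
      have h : e (Fin.castAdd m i) = Fin.natAdd m (Fin.rev i) := by
        ext; simp [e, Fin.val_rev]; omega
      rw [h]
      simp only [_root_.sylvester, Polynomial.sylvester, Matrix.of_apply, Fin.addCases_left,
        Fin.addCases_right, Set.mem_Icc]
      have h2 : ((e j : Fin (m + n)) : ℕ) = m + n - (j + 1) := by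
        simp [e, Fin.val_rev]
      rw [h2, Fin.val_rev]
      split_ifs with h3 h4 h4
      · congr 1; omega
      · exact Polynomial.coeff_eq_zero_of_natDegree_lt (by omega)
      · omega
      · rfl
    | right i =>
      have hi := i.isLt
      have h : e (Fin.natAdd n i) = Fin.castAdd n (Fin.rev i) := by
        ext; simp [e, Fin.val_rev]; omega
      rw [h]
      simp only [_root_.sylvester, Polynomial.sylvester, Matrix.of_apply, Fin.addCases_left,
        Fin.addCases_right, Set.mem_Icc]
      have h2 : ((e j : Fin (m + n)) : ℕ) = m + n - (j + 1) := by
        simp [e, Fin.val_rev]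
      rw [h2, Fin.val_rev]
      split_ifs with h3 h4 h4
      · congr 1; omega
      · exact Polynomial.coeff_eq_zero_of_natDegree_lt (by omega)
      · omega
      · rfl
  rw [_root_.resultant, key, Matrix.det_transpose, Matrix.det_submatrix_equiv_self,
    Polynomial.resultant]

lemma map_resultant {R S : Type*} [CommRing R] [CommRing S] (φ : R →+* S) (m n : ℕ)
    (f g : Polynomial R) :
    φ (_root_.resultant m n f g) = _root_.resultant m n (f.map φ) (g.map φ) := by
  rw [_root_.resultant, _root_.resultant, RingHom.map_det]
  congr 1
  ext i j
  induction i using Fin.addCases <;> simp [_root_.sylvester, apply_ite φ]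

/-- Over an algebraically closed field, a vanishing resultant at the exact degrees yields a common
root. -/
lemma exists_common_root {Ω : Type*} [Field Ω] [IsAlgClosed Ω] (f g : Polynomial Ω)
    (h : Polynomial.resultant f g = 0) : ∃ x, f.eval x = 0 ∧ g.eval x = 0 := by
  have h1 := (Polynomial.resultant_eq_zero_iff.1 h).2
  rw [Polynomial.isCoprime_iff_aeval_ne_zero_of_isAlgClosed Ω Ω] at h1
  push Not at h1
  simpa using h1

/-- The formal degree of the second polynomial may exceed its actual one, as happens for
derivatives in positive characteristic, provided that the first polynomial is monic. -/
lemma exists_common_root_of_monic {Ω : Type*} [Field Ω] [IsAlgClosed Ω] (f g : Polynomial Ω)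
    (m : ℕ) (hf : f.Monic) (hg : g.natDegree ≤ m)
    (h : _root_.resultant f.natDegree m f g = 0) : ∃ x, f.eval x = 0 ∧ g.eval x = 0 := by
  rw [resultant_eq_polynomial_resultant _ _ _ _ le_rfl hg] at h
  obtain ⟨k, rfl⟩ := Nat.exists_eq_add_of_le hg
  rw [Polynomial.resultant_add_right_deg _ _ _ _ k le_rfl, hf.coeff_natDegree, one_pow,
    one_mul] at h
  exact exists_common_root f g h

/-! ### The generic monic polynomial -/

/-- The monic polynomial `x^n + a_{n-1} x^{n-1} + ⋯ + a₁ x`; the entry of `a` at index `i` is the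
coefficient of `x^(i+1)`. -/
noncomputable def genericPoly {R : Type*} [CommRing R] (n : ℕ) (a : Fin (n - 1) → R) :
    Polynomial R :=
  X ^ n + ∑ i : Fin (n - 1), C (a i) * X ^ ((i : ℕ) + 1)

lemma degree_genericPoly_lower {R : Type*} [CommRing R] (n : ℕ) (a : Fin (n - 1) → R)
    (hn : 0 < n) : (∑ i : Fin (n - 1), C (a i) * X ^ ((i : ℕ) + 1) : Polynomial R).degree < n := by
  refine (Polynomial.degree_sum_le _ _).trans_lt ?_
  refine (Finset.sup_lt_iff (WithBot.bot_lt_coe n)).2 fun i _ => ?_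
  refine (Polynomial.degree_C_mul_X_pow_le _ _).trans_lt ?_
  have := i.isLt
  exact WithBot.coe_lt_coe.2 (show (i : ℕ) + 1 < n by omega)

/-- Isolating the coefficient `a_j`: the rest of `f` has coefficients in `k[a_i : i ≠ j]`. -/
lemma genericPoly_split {k Ω : Type*} [Field k] [Field Ω] [Algebra k Ω] (n : ℕ)
    (a : Fin (n - 1) → Ω) (j : Fin (n - 1)) :
    ∃ q : Polynomial (Algebra.adjoin k (a '' {j}ᶜ)),
      genericPoly n a = C (a j) * X ^ ((j : ℕ) + 1) + q.map (algebraMap _ Ω) := by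
  suffices h : X ^ n + ∑ i ∈ Finset.univ.erase j, C (a i) * X ^ ((i : ℕ) + 1) ∈
      Polynomial.lifts (algebraMap (Algebra.adjoin k (a '' {j}ᶜ)) Ω) by
    obtain ⟨q, hq⟩ := (Polynomial.mem_lifts _).1 h
    refine ⟨q, ?_⟩
    rw [hq, genericPoly, ← Finset.add_sum_erase _ _ (Finset.mem_univ j)]
    ring
  refine add_mem (Polynomial.X_pow_mem_lifts _ _) (sum_mem fun i hi => mul_mem ?_
    (Polynomial.X_pow_mem_lifts _ _))
  exact Polynomial.C_mem_lifts (algebraMap (Algebra.adjoin k (a '' {j}ᶜ)) Ω)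
    ⟨a i, Algebra.subset_adjoin ⟨i, by simpa using (Finset.mem_erase.1 hi).1, rfl⟩⟩

lemma coeff_one_genericPoly {R : Type*} [CommRing R] (n : ℕ) (hn : 2 < n) (a : Fin (n - 1) → R) :
    (genericPoly n a).coeff 1 = a ⟨0, by omega⟩ := by
  simp only [genericPoly, Polynomial.coeff_add, Polynomial.coeff_X_pow, Polynomial.finsetSum_coeff,
    Polynomial.coeff_C_mul]
  rw [Finset.sum_eq_single ⟨0, by omega⟩]
  · simp; omega
  · intro i _ hi
    have : (i : ℕ) ≠ 0 := fun h => hi (Fin.ext h)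
    simp; omega
  · simp

/-! ### Critical values in characteristic two -/

/-- Elements algebraic over `A` form an `A`-subalgebra, hence are stable under polynomials over
`A`. -/
lemma IsAlgebraic.aeval_of {A Ω : Type*} [CommRing A] [IsDomain A] [CommRing Ω]
    [Algebra A Ω] {x : Ω} (hx : IsAlgebraic A x) (r : Polynomial A) :
    IsAlgebraic A (aeval x r) := by
  have h := Subalgebra.aeval_coe (Subalgebra.algebraicClosure A Ω) ⟨x, hx⟩ r
  rw [h]
  exact (aeval _ r : Subalgebra.algebraicClosure A Ω).2

/-- For algebraically independent coefficients in characteristic two, no critical value of `f` is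
also a critical value of `f + α`. -/
lemma no_common_critical_value {k Ω : Type*} [Field k] [Field Ω] [Algebra k Ω] [CharP Ω 2]
    (n : ℕ) (hn : 2 < n) (a : Fin (n - 1) → Ω) (ha : AlgebraicIndependent k a)
    (α : Polynomial k) (hα : α ≠ 0) (x₀ x₁ : Ω)
    (h₀ : (derivative (genericPoly n a)).eval x₀ = 0)
    (h₁ : (derivative (genericPoly n a + α.map (algebraMap k Ω))).eval x₁ = 0)
    (h : (genericPoly n a).eval x₀ = (genericPoly n a + α.map (algebraMap k Ω)).eval x₁) :
    False := by
  have two : (2 : Ω) = 0 := CharTwo.two_eq_zero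
  let j : Fin (n - 1) := ⟨1, by omega⟩
  let i : Fin (n - 1) := ⟨0, by omega⟩
  have htr : ∀ l, ¬ IsAlgebraic (Algebra.adjoin k (a '' {l}ᶜ)) (a l) := fun l =>
    ha.transcendental_adjoin (by simp)
  let A := Algebra.adjoin k (a '' {j}ᶜ)
  let B := Algebra.adjoin k (a '' {i}ᶜ)
  obtain ⟨q, hq⟩ : ∃ q : Polynomial A, _ := genericPoly_split (k := k) n a j
  obtain ⟨p, hp⟩ : ∃ p : Polynomial B, _ := genericPoly_split (k := k) n a i
  change _ = _ + q.map (algebraMap A Ω) at hq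
  change _ = _ + p.map (algebraMap B Ω) at hp
  have hαA : α.map (algebraMap k Ω) = (α.map (algebraMap k A)).map (algebraMap A Ω) := by
    rw [Polynomial.map_map, ← IsScalarTower.algebraMap_eq]
  -- The coefficient of `x` cannot be a scalar, so both derivatives are nonzero.
  have hi0 : ∀ c : k, a i + algebraMap k Ω c ≠ 0 := by
    intro c hc
    refine htr i ?_
    rw [eq_neg_of_add_eq_zero_left hc, IsScalarTower.algebraMap_apply k B Ω, ← map_neg]
    exact isAlgebraic_algebraMap _
  -- In characteristic two the term in `x ^ 2` does not contribute to the derivative.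
  have hd : derivative (C (a j) * X ^ ((j : ℕ) + 1)) = 0 := by
    simp [j, one_add_one_eq_two, Polynomial.derivative_X_pow, two]
  have hc0 : ∀ f : Polynomial Ω, (derivative f).coeff 0 = f.coeff 1 := fun f => by
    simp [Polynomial.coeff_derivative]
  have hx₀ : IsAlgebraic A x₀ := by
    have h2 : derivative (genericPoly n a) = (derivative q).map (algebraMap A Ω) := by
      rw [hq, derivative_add, hd, zero_add, Polynomial.derivative_map]
    refine ⟨derivative q, ?_, ?_⟩
    · intro h3
      rw [h3, Polynomial.map_zero] at h2
      have h4 := hc0 (genericPoly n a)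
      rw [h2, coeff_one_genericPoly n hn] at h4
      exact hi0 0 (by simpa using h4.symm)
    · rw [h2, Polynomial.eval_map_algebraMap] at h₀
      exact h₀
  have hx₁ : IsAlgebraic A x₁ := by
    have h2 : derivative (genericPoly n a + α.map (algebraMap k Ω)) =
        (derivative (q + α.map (algebraMap k A))).map (algebraMap A Ω) := by
      rw [hq, hαA, add_assoc, ← Polynomial.map_add, derivative_add, hd, zero_add,
        Polynomial.derivative_map]
    refine ⟨derivative (q + α.map (algebraMap k A)), ?_, ?_⟩
    · intro h3
      rw [h3, Polynomial.map_zero] at h2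
      have h4 := hc0 (genericPoly n a + α.map (algebraMap k Ω))
      rw [h2, Polynomial.coeff_add, coeff_one_genericPoly n hn, Polynomial.coeff_map] at h4
      exact hi0 _ h4.symm
    · rw [h2, Polynomial.eval_map_algebraMap] at h₁
      exact h₁
  have haev : ∀ (r : Polynomial A) (x : Ω), IsAlgebraic A x → IsAlgebraic A (aeval x r) :=
    fun r x hx => hx.aeval_of r
  have hxx : x₀ ^ 2 = x₁ ^ 2 := by
    by_contra hne
    have hne' := sub_ne_zero.2 hne
    have h2 := h
    rw [hq, hαA, add_assoc, ← Polynomial.map_add] at h2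
    simp only [Polynomial.eval_add, Polynomial.eval_mul, Polynomial.eval_C, Polynomial.eval_pow,
      Polynomial.eval_X, Polynomial.eval_map_algebraMap] at h2
    have h3 : a j = (aeval x₁ (q + α.map (algebraMap k A)) - aeval x₀ q) *
        (x₀ ^ 2 - x₁ ^ 2)⁻¹ := by
      rw [eq_mul_inv_iff_mul_eq₀ hne']
      simp only [j] at h2 ⊢
      linear_combination h2
    apply htr j
    rw [h3]
    exact ((haev _ _ hx₁).sub (haev _ _ hx₀)).mul ((hx₀.pow 2).sub (hx₁.pow 2)).inv
  have hxe : x₀ = x₁ := by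
    have h2 : (x₀ - x₁) ^ 2 = 0 := by
      linear_combination hxx + (x₁ ^ 2 - x₀ * x₁) * two
    exact sub_eq_zero.1 (pow_eq_zero_iff (two_ne_zero)|>.1 h2)
  subst hxe
  have hα0 : aeval x₀ α = 0 := by
    rw [Polynomial.eval_add, Polynomial.eval_map_algebraMap] at h
    exact left_eq_add.1 h
  have hxB : IsAlgebraic B x₀ := IsAlgebraic.extendScalars
    (FaithfulSMul.algebraMap_injective k B) ⟨α, hα, hα0⟩
  have h3 : a i = - aeval x₀ (derivative p) := by
    rw [hp, derivative_add, Polynomial.derivative_map, Polynomial.eval_add,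
      Polynomial.eval_map_algebraMap] at h₀
    rw [eq_neg_iff_add_eq_zero, ← h₀]
    simp [i]
  apply htr i
  rw [h3]
  exact IsAlgebraic.neg (hxB.aeval_of _)

/-! ### Discriminants -/

theorem resultant_of_discriminants_ne_zero
    (Fq : Type*) [Field Fq] [Fintype Fq] (hq2 : Even (Fintype.card Fq))
    (n : ℕ) (hn : 2 < n)
    (α : Polynomial Fq) (hα : α ≠ 0) (hαdeg : α.degree < n) :
    -- `R'` is the ring `𝔽_q[a₁, …, a_{n-1}]`
    let R' := MvPolynomial (Fin (n - 1)) Fq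
    let S := Polynomial R'   -- `𝔽_q[a₁, …, a_{n-1}][t]`
    -- `F = x^n + a_{n-1}x^{n-1} + ⋯ + a₁ x + t`
    let F : Polynomial S := X ^ n +
      (∑ i : Fin (n - 1), C (Polynomial.C (MvPolynomial.X i)) * X ^ ((i : ℕ) + 1)) +
      C Polynomial.X
    let αS : Polynomial S :=
      α.map ((Polynomial.C : R' →+* S).comp (MvPolynomial.C : Fq →+* R'))
    let D : S := resultant n (n - 1) F (derivative F)
    let Dα : S := resultant n (n - 1) (F + αS) (derivative (F + αS))
    resultant D.natDegree Dα.natDegree D Dα ≠ 0 := by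
  intro R' S F αS D Dα hres
  let Ω := AlgebraicClosure (FractionRing R')
  let φ : R' →+* Ω := algebraMap R' Ω
  have hφ : Function.Injective φ :=
    (algebraMap (FractionRing R') Ω).injective.comp (IsFractionRing.injective R' (FractionRing R'))
  have hchar : CharP Fq 2 := by
    obtain ⟨p, hp⟩ := CharP.exists Fq
    have h2 : ringChar Fq = 2 := by
      by_contra hne
      have := FiniteField.odd_card_of_char_ne_two hne
      rw [Nat.even_iff] at hq2
      omega
    exact (ringChar.eq_iff).1 h2
  have : CharP Ω 2 := charP_of_injective_algebraMap (algebraMap Fq Ω).injective 2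
  let a : Fin (n - 1) → Ω := fun i => φ (MvPolynomial.X i)
  have ha : AlgebraicIndependent Fq a :=
    (MvPolynomial.algebraicIndependent_X (Fin (n - 1)) Fq).map'
      (f := IsScalarTower.toAlgHom Fq R' Ω) hφ
  -- A common root of `D` and `D_α` in `Ω`.
  obtain ⟨t, ht, ht'⟩ : ∃ t, (D.map φ).eval t = 0 ∧ (Dα.map φ).eval t = 0 := by
    apply exists_common_root
    rw [Polynomial.natDegree_map_eq_of_injective hφ, Polynomial.natDegree_map_eq_of_injective hφ,
      Polynomial.resultant_map_map, ← resultant_eq_polynomial_resultant _ _ _ _ le_rfl le_rfl, hres,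
      map_zero]
  let ψ : S →+* Ω := Polynomial.eval₂RingHom φ t
  have hψC : ∀ r : R', ψ (Polynomial.C r) = φ r := fun r => Polynomial.eval₂_C φ t
  have hψX : ψ Polynomial.X = t := Polynomial.eval₂_X φ t
  have hFψ : F.map ψ = genericPoly n a + C t := by
    simp [F, hψC, hψX, genericPoly, a, Polynomial.map_sum]
  have hαψ : αS.map ψ = α.map (algebraMap Fq Ω) := by
    simp only [αS, Polynomial.map_map]
    congr 1
    ext c
    rw [RingHom.comp_apply, RingHom.comp_apply, hψC, ← MvPolynomial.algebraMap_eq]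
    exact (IsScalarTower.algebraMap_apply Fq R' Ω c).symm
  have hroot : ∀ β : Polynomial Ω, β.degree < n →
      _root_.resultant n (n - 1) (genericPoly n a + C t + β)
        (derivative (genericPoly n a + C t + β)) = 0 →
      ∃ x, (genericPoly n a + β).eval x + t = 0 ∧
        (derivative (genericPoly n a + β)).eval x = 0 := by
    intro β hβ h
    -- Adding terms of degree less than `n` keeps the polynomial monic of degree `n`.
    have hlow : ((∑ i : Fin (n - 1), C (a i) * X ^ ((i : ℕ) + 1)) + (C t + β) :
        Polynomial Ω).degree < n := by
      refine (Polynomial.degree_add_le _ _).trans_lt (max_lt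
        (degree_genericPoly_lower n a (by omega)) ?_)
      refine (Polynomial.degree_add_le _ _).trans_lt (max_lt ?_ hβ)
      exact Polynomial.degree_C_le.trans_lt (by exact_mod_cast (by omega : 0 < n))
    have he : genericPoly n a + C t + β = X ^ n +
        ((∑ i : Fin (n - 1), C (a i) * X ^ ((i : ℕ) + 1)) + (C t + β)) := by
      rw [genericPoly]; ring
    have hmon : (genericPoly n a + C t + β).Monic := by
      rw [he]; exact Polynomial.monic_X_pow_add hlow
    have hdeg : (genericPoly n a + C t + β).natDegree = n := by
      rw [he]; exact Polynomial.natDegree_eq_of_degree_eq_some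
        (by rw [Polynomial.degree_add_eq_left_of_degree_lt] <;> simp [hlow])
    obtain ⟨x, hx, hx'⟩ := exists_common_root_of_monic _ _ (n - 1) hmon
      ((Polynomial.natDegree_derivative_le _).trans (by rw [hdeg])) (by rw [hdeg]; exact h)
    refine ⟨x, ?_, ?_⟩
    · rw [← hx]; simp only [Polynomial.eval_add, Polynomial.eval_C]; ring
    · rw [← hx']; simp
  -- Evaluating `D` at `t` is specialising `F` at `t` before taking the resultant.
  have hψ : ∀ P : S, (P.map φ).eval t = ψ P := fun P => by
    rw [Polynomial.eval_map]; rfl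
  obtain ⟨x₀, hx₀, hx₀'⟩ := hroot 0 (by simp) (by
    rw [← ht, hψ, map_resultant, ← Polynomial.derivative_map, hFψ, add_zero])
  obtain ⟨x₁, hx₁, hx₁'⟩ := hroot (α.map (algebraMap Fq Ω))
    ((Polynomial.degree_map_le).trans_lt hαdeg) (by
    rw [← ht', hψ, map_resultant, ← Polynomial.derivative_map, Polynomial.map_add, hFψ, hαψ])
  rw [add_zero] at hx₀ hx₀'
  exact no_common_critical_value n hn a ha α hα x₀ x₁ hx₀' hx₁'
    (add_right_cancel (hx₀.trans hx₁.symm))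
end
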